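/- Let n, m be integers with 2 ≤ n < m. Define G = −6m^2 − 5mn + 4m^2 n − 6n^2 + 4mn^2 + 4m^2 n^2, H = −22m + 10m^2 − 22n + 25mn + 30m^2 n + 10n^2 + 30mn^2 + 20m^2 n^2, F = 12m^3 − 36m^4 + 70m^2 n + 60m^3 n − 100m^4 n + 70mn^2 + 211m^2 n^2 + 2m^3 n^2 − 40m^4 n^2 + 12n^3 + 60mn^3 + 2m^2 n^3 + 40m^4 n^3 − 36n^4 − 100mn^4 − 40m^2 n^4 + 40m^3 n^4 + 16m^4 n^4, and set c* = −(2m + n + 2mn)(m + 2n + 2mn)/(m + n) and λ* = −(m + n)·F / (7(1+2m)(1+2n)(m + n + mn)·G·H). Then G ≠ 0, H ≠ 0, and p_n(c*, λ*) = 0 and p_m(c*, λ*) = 0. -/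

import Mathlib

/-- The polynomial `f(c,n)` from the type-C truncation polynomial. -/
noncomputable def fC (c n : ℂ) : ℂ :=
  -204 * c ^ 2 - 192 * c ^ 3 + 171 * c ^ 4 + 952 * c * n - 4612 * c ^ 2 * n
    + 2348 * c ^ 3 * n - 38 * c ^ 4 * n + 1568 * n ^ 2 - 7708 * c * n ^ 2
    + 1788 * c ^ 2 * n ^ 2 + 2401 * c ^ 3 * n ^ 2 - 74 * c ^ 4 * n ^ 2
    + 560 * n ^ 3 - 18936 * c * n ^ 3 + 22280 * c ^ 2 * n ^ 3
    - 2112 * c ^ 3 * n ^ 3 + 8 * c ^ 4 * n ^ 3 - 16304 * n ^ 4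
    + 18640 * c * n ^ 4 + 3420 * c ^ 2 * n ^ 4 - 364 * c ^ 3 * n ^ 4
    + 8 * c ^ 4 * n ^ 4 - 17408 * n ^ 5 + 27680 * c * n ^ 5
    - 10576 * c ^ 2 * n ^ 5 + 304 * c ^ 3 * n ^ 5 - 3264 * n ^ 6
    - 3072 * c * n ^ 6 + 2736 * c ^ 2 * n ^ 6

/-- The polynomial `g(c,n)` from the type-C truncation polynomial. -/
noncomputable def gC (c n : ℂ) : ℂ :=
  -14 * (c - 1) * (2 * c - 1) * (22 + 5 * c) * (n - 2) * (n - 1)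
    * (3 * c + 10 * n + 2 * c * n + 12 * n ^ 2)
    * (5 * c + 28 * n + 2 * c * n + 40 * n ^ 2)

/-- The polynomial `h(c,n)` from the type-C truncation polynomial. -/
noncomputable def hC (c n : ℂ) : ℂ :=
  49 * (c - 1) ^ 2 * (22 + 5 * c) ^ 2
    * (21 * c ^ 2 + 70 * c * n - 14 * c ^ 2 * n + 200 * n ^ 2 - 135 * c * n ^ 2
      - 26 * c ^ 2 * n ^ 2 + 380 * n ^ 3 - 176 * c * n ^ 3 + 8 * c ^ 2 * n ^ 3
      + 436 * n ^ 4 + 132 * c * n ^ 4 + 8 * c ^ 2 * n ^ 4 + 448 * n ^ 5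
      + 112 * c * n ^ 5 + 336 * n ^ 6)

/-- The type-C truncation polynomial `p_n(c,λ) = f(c,n) + λ·g(c,n) + λ²·h(c,n)`. -/
noncomputable def pC (n c lam : ℂ) : ℂ := fC c n + lam * gC c n + lam ^ 2 * hC c n

/-- The truncation polynomial after absorbing `7(c-1)(22+5c)` into `λ`, with `c = -P/s`
and `7(c-1)(22+5c)λ = -F/(sG)`, cleared of denominators. -/
theorem key_identity (n m P s F G : ℂ) (hs : s = m + n)
    (hP : P = (2 * m + n + 2 * m * n) * (m + 2 * n + 2 * m * n))
    (hG : G = -6 * m ^ 2 - 5 * m * n + 4 * m ^ 2 * n - 6 * n ^ 2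
      + 4 * m * n ^ 2 + 4 * m ^ 2 * n ^ 2)
    (hF : F = 12 * m ^ 3 - 36 * m ^ 4 + 70 * m ^ 2 * n + 60 * m ^ 3 * n
      - 100 * m ^ 4 * n + 70 * m * n ^ 2 + 211 * m ^ 2 * n ^ 2
      + 2 * m ^ 3 * n ^ 2 - 40 * m ^ 4 * n ^ 2 + 12 * n ^ 3
      + 60 * m * n ^ 3 + 2 * m ^ 2 * n ^ 3 + 40 * m ^ 4 * n ^ 3
      - 36 * n ^ 4 - 100 * m * n ^ 4 - 40 * m ^ 2 * n ^ 4
      + 40 * m ^ 3 * n ^ 4 + 16 * m ^ 4 * n ^ 4) :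
    G ^ 2 * (P ^ 4 * (171 - 38 * n - 74 * n ^ 2 + 8 * n ^ 3 + 8 * n ^ 4)
        - P ^ 3 * s * (-192 + 2348 * n + 2401 * n ^ 2 - 2112 * n ^ 3 - 364 * n ^ 4 + 304 * n ^ 5)
        + P ^ 2 * s ^ 2 * (-204 - 4612 * n + 1788 * n ^ 2 + 22280 * n ^ 3 + 3420 * n ^ 4
            - 10576 * n ^ 5 + 2736 * n ^ 6)
        - P * s ^ 3 * (952 * n - 7708 * n ^ 2 - 18936 * n ^ 3 + 18640 * n ^ 4 + 27680 * n ^ 5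
            - 3072 * n ^ 6)
        + s ^ 4 * (1568 * n ^ 2 + 560 * n ^ 3 - 16304 * n ^ 4 - 17408 * n ^ 5 - 3264 * n ^ 6))
      + 2 * F * G * (-2 * P - s) * (n - 2) * (n - 1)
        * (-(3 + 2 * n) * P + s * (10 * n + 12 * n ^ 2))
        * (-(5 + 2 * n) * P + s * (28 * n + 40 * n ^ 2))
      + F ^ 2 * (P ^ 2 * (21 - 14 * n - 26 * n ^ 2 + 8 * n ^ 3 + 8 * n ^ 4)
        - P * s * (70 * n - 135 * n ^ 2 - 176 * n ^ 3 + 132 * n ^ 4 + 112 * n ^ 5)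
        + s ^ 2 * (200 * n ^ 2 + 380 * n ^ 3 + 436 * n ^ 4 + 448 * n ^ 5 + 336 * n ^ 6)) = 0 := by
  subst hs hP hG hF
  ring

/-- Vanishing of the truncation polynomial at the intersection point, for one of the two curves. -/
theorem pC_zero (n m P s F G A H c l : ℂ) (hs : s = m + n)
    (hP : P = (2 * m + n + 2 * m * n) * (m + 2 * n + 2 * m * n))
    (hG : G = -6 * m ^ 2 - 5 * m * n + 4 * m ^ 2 * n - 6 * n ^ 2
      + 4 * m * n ^ 2 + 4 * m ^ 2 * n ^ 2)
    (hF : F = 12 * m ^ 3 - 36 * m ^ 4 + 70 * m ^ 2 * n + 60 * m ^ 3 * n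
      - 100 * m ^ 4 * n + 70 * m * n ^ 2 + 211 * m ^ 2 * n ^ 2
      + 2 * m ^ 3 * n ^ 2 - 40 * m ^ 4 * n ^ 2 + 12 * n ^ 3
      + 60 * m * n ^ 3 + 2 * m ^ 2 * n ^ 3 + 40 * m ^ 4 * n ^ 3
      - 36 * n ^ 4 - 100 * m * n ^ 4 - 40 * m ^ 2 * n ^ 4
      + 40 * m ^ 3 * n ^ 4 + 16 * m ^ 4 * n ^ 4)
    (hA : A = P + s) (hH : H = 5 * P - 22 * s)
    (hs0 : s ≠ 0) (hG0 : G ≠ 0) (hA0 : A ≠ 0) (hH0 : H ≠ 0)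
    (hc : c = -P / s) (hl : l = -s * F / (7 * A * G * H)) : pC n c l = 0 := by
  have key := key_identity n m P s F G hs hP hG hF
  have h1 : c - 1 = -A / s := by rw [hc, hA]; field_simp; ring
  have h2 : 22 + 5 * c = -H / s := by rw [hc, hH]; field_simp; ring
  have hmu : 7 * (c - 1) * (22 + 5 * c) * l = -F / (s * G) := by
    rw [h1, h2, hl]; field_simp
  clear hs hP hG hF
  obtain ⟨u, hu⟩ : ∃ u, u = 7 * (c - 1) * (22 + 5 * c) * l := ⟨_, rfl⟩
  rw [← hu] at hmu
  have e : pC n c l = fC c n - 2 * u * ((2 * c - 1) * (n - 2) * (n - 1)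
    * (3 * c + 10 * n + 2 * c * n + 12 * n ^ 2)
    * (5 * c + 28 * n + 2 * c * n + 40 * n ^ 2)) + u ^ 2 *
    (21 * c ^ 2 + 70 * c * n - 14 * c ^ 2 * n + 200 * n ^ 2 - 135 * c * n ^ 2
      - 26 * c ^ 2 * n ^ 2 + 380 * n ^ 3 - 176 * c * n ^ 3 + 8 * c ^ 2 * n ^ 3
      + 436 * n ^ 4 + 132 * c * n ^ 4 + 8 * c ^ 2 * n ^ 4 + 448 * n ^ 5
      + 112 * c * n ^ 5 + 336 * n ^ 6) := by
    rw [hu]; unfold pC gC hC; ring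
  have hcs : c * s = -P := by rw [hc]; field_simp
  have hus : u * (s * G) = -F := by rw [hmu]; field_simp
  have hP' : P = -(c * s) := by rw [hcs]; ring
  have hF' : F = -(u * (s * G)) := by rw [hus]; ring
  have fin : s ^ 4 * G ^ 2 * pC n c l = 0 := by
    rw [← key, e, hP', hF']
    unfold fC
    ring
  simpa [hs0, hG0] using fin

/-- The first nontrivial intersection point of the type-C truncation curves
`V(I_n)` and `V(I_m)` lies on both curves. -/
theorem typeC_first_intersection_point (n m : ℤ) (hn : 2 ≤ n) (hnm : n < m)
    (nn mm : ℂ) (hnn : nn = (n : ℂ)) (hmm : mm = (m : ℂ))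
    (G H F cs ls : ℂ)
    (hG : G = -6 * mm ^ 2 - 5 * mm * nn + 4 * mm ^ 2 * nn - 6 * nn ^ 2
      + 4 * mm * nn ^ 2 + 4 * mm ^ 2 * nn ^ 2)
    (hH : H = -22 * mm + 10 * mm ^ 2 - 22 * nn + 25 * mm * nn + 30 * mm ^ 2 * nn
      + 10 * nn ^ 2 + 30 * mm * nn ^ 2 + 20 * mm ^ 2 * nn ^ 2)
    (hF : F = 12 * mm ^ 3 - 36 * mm ^ 4 + 70 * mm ^ 2 * nn + 60 * mm ^ 3 * nn
      - 100 * mm ^ 4 * nn + 70 * mm * nn ^ 2 + 211 * mm ^ 2 * nn ^ 2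
      + 2 * mm ^ 3 * nn ^ 2 - 40 * mm ^ 4 * nn ^ 2 + 12 * nn ^ 3
      + 60 * mm * nn ^ 3 + 2 * mm ^ 2 * nn ^ 3 + 40 * mm ^ 4 * nn ^ 3
      - 36 * nn ^ 4 - 100 * mm * nn ^ 4 - 40 * mm ^ 2 * nn ^ 4
      + 40 * mm ^ 3 * nn ^ 4 + 16 * mm ^ 4 * nn ^ 4)
    (hcs : cs = -(2 * mm + nn + 2 * mm * nn) * (mm + 2 * nn + 2 * mm * nn)
        / (mm + nn))
    (hls : ls = -(mm + nn) * F
        / (7 * (1 + 2 * mm) * (1 + 2 * nn) * (mm + nn + mm * nn) * G * H)) :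
    G ≠ 0 ∧ H ≠ 0 ∧ pC nn cs ls = 0 ∧ pC mm cs ls = 0 := by
  have ha : (2:ℤ) ≤ n := hn
  have hb : (3:ℤ) ≤ m := by omega
  obtain ⟨a, rfl⟩ : ∃ a, n = a + 2 := ⟨n - 2, by ring⟩
  obtain ⟨b, rfl⟩ : ∃ b, m = b + 3 := ⟨m - 3, by ring⟩
  have ha0 : 0 ≤ a := by omega
  have hb0 : 0 ≤ b := by omega
  have hs0 : mm + nn ≠ 0 := by
    rw [hnn, hmm]
    have : (b + 3) + (a + 2) ≠ 0 := by omega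
    exact_mod_cast this
  have hA0 : (1 + 2 * mm) * (1 + 2 * nn) * (mm + nn + mm * nn) ≠ 0 := by
    rw [hnn, hmm]
    have : (1 + 2 * (b + 3)) * (1 + 2 * (a + 2)) * ((b + 3) + (a + 2) + (b + 3) * (a + 2)) ≠ 0 := by
      positivity
    exact_mod_cast this
  have hG0 : G ≠ 0 := by
    have h : (0:ℤ) < 156 * b ^ 0 * a ^ 0 + 114 * b ^ 1 * a ^ 0 + 18 * b ^ 2 * a ^ 0 + 189 * b ^ 0 * a ^ 1 + 131 * b ^ 1 * a ^ 1 + 20 * b ^ 2 * a ^ 1 + 42 * b ^ 0 * a ^ 2 + 28 * b ^ 1 * a ^ 2 + 4 * b ^ 2 * a ^ 2 := by positivity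
    have e : G = ((156 * b ^ 0 * a ^ 0 + 114 * b ^ 1 * a ^ 0 + 18 * b ^ 2 * a ^ 0 + 189 * b ^ 0 * a ^ 1 + 131 * b ^ 1 * a ^ 1 + 20 * b ^ 2 * a ^ 1 + 42 * b ^ 0 * a ^ 2 + 28 * b ^ 1 * a ^ 2 + 4 * b ^ 2 * a ^ 2 : ℤ) : ℂ) := by
      rw [hG, hnn, hmm]; push_cast; ring
    rw [e]
    exact_mod_cast h.ne'
  have hH0 : H ≠ 0 := by
    have e : H = ((1790 * b ^ 0 * a ^ 0 + 1048 * b ^ 1 * a ^ 0 + 150 * b ^ 2 * a ^ 0 + 1443 * b ^ 0 * a ^ 1 + 805 * b ^ 1 * a ^ 1 + 110 * b ^ 2 * a ^ 1 + 280 * b ^ 0 * a ^ 2 + 150 * b ^ 1 * a ^ 2 + 20 * b ^ 2 * a ^ 2 : ℤ) : ℂ) := by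
      rw [hH, hnn, hmm]; push_cast; ring
    have h : (0:ℤ) < 1790 * b ^ 0 * a ^ 0 + 1048 * b ^ 1 * a ^ 0 + 150 * b ^ 2 * a ^ 0 + 1443 * b ^ 0 * a ^ 1 + 805 * b ^ 1 * a ^ 1 + 110 * b ^ 2 * a ^ 1 + 280 * b ^ 0 * a ^ 2 + 150 * b ^ 1 * a ^ 2 + 20 * b ^ 2 * a ^ 2 := by positivity
    rw [e]
    exact_mod_cast h.ne'
  have hls1 : ls = -(mm + nn) * F
      / (7 * ((1 + 2 * mm) * (1 + 2 * nn) * (mm + nn + mm * nn)) * G * H) := by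
    rw [hls]; congr 1; ring
  refine ⟨hG0, hH0, ?_, ?_⟩
  · refine pC_zero nn mm ((2 * mm + nn + 2 * mm * nn) * (mm + 2 * nn + 2 * mm * nn)) (mm + nn)
      F G _ H cs ls rfl rfl hG hF ?_ ?_ hs0 hG0 hA0 hH0 ?_ hls1
    · ring
    · rw [hH]; ring
    · rw [hcs]; ring
  · refine pC_zero mm nn ((2 * mm + nn + 2 * mm * nn) * (mm + 2 * nn + 2 * mm * nn)) (mm + nn)
      F G _ H cs ls (by ring) (by ring) (by rw [hG]; ring) (by rw [hF]; ring) ?_ ?_ hs0 hG0 hA0 hH0 ?_ hls1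
    · ring
    · rw [hH]; ring
    · rw [hcs]; ring
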